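/- For all integers n,d ≥ 1, C^d_n = Σ_α (−1)^{n−ℓ(α)} · binom(d−α_1, α_1−1) · Π_{i=2}^{ℓ(α)} binom(d+1−α_i, α_i), where the sum is over all compositions α = (α_1,…,α_{ℓ(α)}) of n whose largest part satisfies max(α) ≤ (d+1)/2. -/

import Mathlib

/-- Full binary trees (every internal node has exactly two children). -/
inductive BTree : Type
  | leaf : BTree
  | node : BTree → BTree → BTree
deriving DecidableEq

namespace BTree

/-- Number of leaves of a full binary tree. -/
def numLeaves : BTree → ℕ
  | leaf => 1
  | node l r => l.numLeaves + r.numLeaves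

/-- The list of pairs (left depth, right depth) of the leaves, in preorder. -/
def leafDepths : BTree → List (ℕ × ℕ)
  | leaf => [(0, 0)]
  | node l r =>
      (l.leafDepths.map fun p => (p.1 + 1, p.2)) ++ (r.leafDepths.map fun p => (p.1, p.2 + 1))

/-- The left depth sequence `ld(t)` of the leaves of `t`, in preorder. -/
def ld (t : BTree) : List ℕ := t.leafDepths.map Prod.fst

/-- The right depth sequence `rd(t)` of the leaves of `t`, in preorder. -/
def rd (t : BTree) : List ℕ := t.leafDepths.map Prod.snd

end BTree

/-- `b ~^d c` : the sequences have equal length and agree at every position where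
either entry is `< d`. -/
def DepthEq (d : ℕ) : List ℕ → List ℕ → Prop :=
  List.Forall₂ (fun a b => min a b < d → a = b)

/-- `b ~_k c` : entrywise congruence mod `k` (and equal length). -/
def ModListEq (k : ℕ) : List ℕ → List ℕ → Prop :=
  List.Forall₂ (fun a b => a % k = b % k)

/-- The relation `t ~ t'` iff `ld(t) ~^d ld(t')` and `rd(t) ~^e rd(t')`. -/
def DeRel (d e : ℕ) (t t' : BTree) : Prop :=
  DepthEq d t.ld t'.ld ∧ DepthEq e t.rd t'.rd

/-- The relation `t ~ t'` iff `ld(t) ~_k^d ld(t')` (i.e. `ld(t) ~_k ld(t')` and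
`ld(t) ~^d ld(t')`). -/
def DkRel (d k : ℕ) (t t' : BTree) : Prop :=
  ModListEq k t.ld t'.ld ∧ DepthEq d t.ld t'.ld

/-- `T_n`: full binary trees with `n+1` leaves. -/
def Tn (n : ℕ) : Type := {t : BTree // t.numLeaves = n + 1}

/-- `C^{d,e}_n`: the number of equivalence classes of the relation `DeRel d e` on `T_n`. -/
noncomputable def Cde (d e n : ℕ) : ℕ :=
  Nat.card (Quot (fun t t' : Tn n => DeRel d e t.1 t'.1))

/-- `C^d_{k,n}`: the number of equivalence classes of `ld(t) ~_k^d ld(t')` on `T_n`. -/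
noncomputable def Cdk (d k n : ℕ) : ℕ :=
  Nat.card (Quot (fun t t' : Tn n => DkRel d k t.1 t'.1))

/-
Only the last entry of `ld t` and the first entry of `rd t` are zero, so `rd` contributes nothing
to the relation beyond `n`, and the classes in `T_n` correspond to the sequences `ld t` with entries
capped at `d`. The `1` coming from the last leaf of the left subtree is the first `1` of a capped
sequence when `d ≥ 2`, so the sequence splits uniquely at the root. Hence the generating functions
`A_d` of the `C^{d,1}_n` satisfy `A_{d+2} = 1 + X A_{d+1} A_{d+2}`, with `A_1 = 1 / (1 - X)`, and so
`A_{d+1} = F_{d+1} / F_{d+2}`, where `F_{m+2} = F_{m+1} - X F_m` are the (signed) Fibonacci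
polynomials, `F_0 = F_1 = 1`. Therefore `A_{d+1} = 1 + X F_d / F_{d+2}`; expanding `1 / F_{d+2}`
as a geometric series produces the sum over compositions, in which `X F_d` accounts for the first
part.
-/

open Finset.HasAntidiagonal (antidiagonal mem_antidiagonal)
open PowerSeries (X coeff mk coeff_mk coeff_mul coeff_one coeff_succ_X_mul)
open scoped PowerSeries

theorem depthEq_iff_map_min_eq {d : ℕ} {b c : List ℕ} :
    DepthEq d b c ↔ b.map (min · d) = c.map (min · d) := by
  have entry_iff : (fun x y : ℕ => min x y < d → x = y) = fun x y => min x d = min y d := by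
    ext x y
    omega
  rw [DepthEq, entry_iff, ← List.forall₂_eq_eq_eq, List.forall₂_map_left_iff,
    List.forall₂_map_right_iff]

theorem map_min_one_eq_replicate {L : List ℕ} (h0 : 0 ∉ L) :
    L.map (min · 1) = List.replicate L.length 1 := by
  refine List.eq_replicate_iff.2 ⟨List.length_map _, ?_⟩
  rintro _ hb
  obtain ⟨a, ha, rfl⟩ := List.mem_map.1 hb
  have : a ≠ 0 := ne_of_mem_of_not_mem ha h0
  omega

namespace BTree

theorem numLeaves_pos (t : BTree) : 0 < t.numLeaves := by
  cases t with
  | leaf => exact Nat.one_pos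
  | node l r => exact Nat.add_pos_left l.numLeaves_pos _

theorem numLeaves_eq_one_iff {t : BTree} : t.numLeaves = 1 ↔ t = leaf := by
  cases t with
  | leaf => simp [numLeaves]
  | node l r =>
    have := l.numLeaves_pos
    have := r.numLeaves_pos
    simp only [numLeaves, reduceCtorEq, iff_false]
    omega

theorem exists_numLeaves_eq (n : ℕ) : ∃ t : BTree, t.numLeaves = n + 1 := by
  induction n with
  | zero => exact ⟨leaf, rfl⟩
  | succ n ih =>
    obtain ⟨t, ht⟩ := ih
    exact ⟨node t leaf, by simp only [numLeaves, ht]⟩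

theorem length_leafDepths (t : BTree) : t.leafDepths.length = t.numLeaves := by
  induction t with
  | leaf => rfl
  | node l r hl hr => simp [numLeaves, leafDepths, hl, hr]

theorem length_ld (t : BTree) : t.ld.length = t.numLeaves := by
  simp [ld, length_leafDepths]

theorem length_rd (t : BTree) : t.rd.length = t.numLeaves := by
  simp [rd, length_leafDepths]

theorem ld_node (l r : BTree) : (node l r).ld = l.ld.map (· + 1) ++ r.ld := by
  simp [ld, leafDepths, Function.comp_def]

theorem rd_node (l r : BTree) : (node l r).rd = l.rd ++ r.rd.map (· + 1) := by
  simp [rd, leafDepths, Function.comp_def]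

theorem exists_ld_eq_append_zero (t : BTree) : ∃ L, t.ld = L ++ [0] ∧ 0 ∉ L := by
  induction t with
  | leaf => exact ⟨[], rfl, List.not_mem_nil⟩
  | node l r _ hr =>
    obtain ⟨L, hL, h0⟩ := hr
    exact ⟨l.ld.map (· + 1) ++ L, by simp [ld_node, hL], by simp [h0]⟩

theorem exists_rd_eq_zero_cons (t : BTree) : ∃ R, t.rd = 0 :: R ∧ 0 ∉ R := by
  induction t with
  | leaf => exact ⟨[], rfl, List.not_mem_nil⟩
  | node l r hl _ =>
    obtain ⟨R, hR, h0⟩ := hl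
    exact ⟨R ++ r.rd.map (· + 1), by simp [rd_node, hR], by simp [h0]⟩

theorem depthEq_one_ld_of_numLeaves_eq {t t' : BTree} (h : t.numLeaves = t'.numLeaves) :
    DepthEq 1 t.ld t'.ld := by
  obtain ⟨L, hL, h0⟩ := t.exists_ld_eq_append_zero
  obtain ⟨L', hL', h0'⟩ := t'.exists_ld_eq_append_zero
  have length_eq : L.length = L'.length := by simpa [hL, hL', ← length_ld] using h
  simp [depthEq_iff_map_min_eq, hL, hL', map_min_one_eq_replicate h0,
    map_min_one_eq_replicate h0', length_eq]

theorem depthEq_one_rd_of_numLeaves_eq {t t' : BTree} (h : t.numLeaves = t'.numLeaves) :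
    DepthEq 1 t.rd t'.rd := by
  obtain ⟨R, hR, h0⟩ := t.exists_rd_eq_zero_cons
  obtain ⟨R', hR', h0'⟩ := t'.exists_rd_eq_zero_cons
  have length_eq : R.length = R'.length := by simpa [hR, hR', ← length_rd] using h
  simp [depthEq_iff_map_min_eq, hR, hR', map_min_one_eq_replicate h0,
    map_min_one_eq_replicate h0', length_eq]

/-- The left depth sequence of `t` with every entry capped at `d`, a complete invariant of the class
of `t` under `ld(t) ~^d ld(t')`. -/
def cappedLd (d : ℕ) (t : BTree) : List ℕ := t.ld.map (min · d)

theorem length_cappedLd (d : ℕ) (t : BTree) : (t.cappedLd d).length = t.numLeaves := by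
  rw [cappedLd, List.length_map, length_ld]

theorem cappedLd_succ_node (d : ℕ) (l r : BTree) :
    (node l r).cappedLd (d + 1) = (l.cappedLd d).map (· + 1) ++ r.cappedLd (d + 1) := by
  simp [cappedLd, ld_node, Function.comp_def]

theorem exists_cappedLd_succ_eq_append_zero (d : ℕ) (t : BTree) :
    ∃ L, t.cappedLd (d + 1) = L ++ [0] ∧ 0 ∉ L := by
  obtain ⟨L, hL, h0⟩ := t.exists_ld_eq_append_zero
  exact ⟨L.map (min · (d + 1)), by simp [cappedLd, hL], by simpa using h0⟩

theorem deRel_one_iff_cappedLd_eq {d : ℕ} {t t' : BTree} (h : t.numLeaves = t'.numLeaves) :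
    DeRel d 1 t t' ↔ t.cappedLd d = t'.cappedLd d := by
  rw [DeRel, and_iff_left (depthEq_one_rd_of_numLeaves_eq h), depthEq_iff_map_min_eq, cappedLd,
    cappedLd]

end BTree

open BTree

instance (n : ℕ) : Nonempty (Tn n) := nonempty_subtype.2 (exists_numLeaves_eq n)

theorem Cde_eq_one_of_forall_deRel {d e n : ℕ} (h : ∀ t t' : Tn n, DeRel d e t.1 t'.1) :
    Cde d e n = 1 := by
  refine Nat.card_eq_one_iff_unique.2 ⟨⟨fun a b => ?_⟩, ⟨Quot.mk _ (Classical.arbitrary _)⟩⟩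
  induction a using Quot.ind with | _ t
  induction b using Quot.ind with | _ t'
  exact Quot.sound (h t t')

theorem Cde_one_one (n : ℕ) : Cde 1 1 n = 1 := by
  refine Cde_eq_one_of_forall_deRel fun t t' => ?_
  have h : t.1.numLeaves = t'.1.numLeaves := t.2.trans t'.2.symm
  exact ⟨depthEq_one_ld_of_numLeaves_eq h, depthEq_one_rd_of_numLeaves_eq h⟩

theorem Cde_one_right_zero (d : ℕ) : Cde d 1 0 = 1 := by
  refine Cde_eq_one_of_forall_deRel fun t t' => ?_
  rw [numLeaves_eq_one_iff.1 t.2, numLeaves_eq_one_iff.1 t'.2]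
  exact (deRel_one_iff_cappedLd_eq rfl).2 rfl

/-- The set of capped left depth sequences of the trees in `T_n`; its elements stand for the classes
counted by `C^{d,1}_n`. -/
def cappedLdSet (d n : ℕ) : Set (List ℕ) := Set.range fun t : Tn n => t.1.cappedLd d

theorem cappedLd_mem_cappedLdSet {d n : ℕ} {t : BTree} (ht : t.numLeaves = n + 1) :
    t.cappedLd d ∈ cappedLdSet d n :=
  ⟨⟨t, ht⟩, rfl⟩

theorem length_of_mem_cappedLdSet {d n : ℕ} {L : List ℕ} (hL : L ∈ cappedLdSet d n) :
    L.length = n + 1 := by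
  obtain ⟨⟨t, ht⟩, rfl⟩ := hL
  rw [length_cappedLd, ht]

theorem Cde_one_right_eq_ncard (d n : ℕ) : Cde d 1 n = (cappedLdSet d n).ncard := by
  have rel_eq_ker : (fun t t' : Tn n => DeRel d 1 t.1 t'.1) =
      (Setoid.ker fun t : Tn n => t.1.cappedLd d).r := by
    ext t t'
    exact deRel_one_iff_cappedLd_eq (t.2.trans t'.2.symm)
  rw [Cde, rel_eq_ker, ← Nat.card_coe_set_eq]
  exact Nat.card_congr (Setoid.quotientKerEquivRange _)

theorem finite_cappedLdSet (d n : ℕ) : (cappedLdSet d n).Finite := by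
  have finite_words : {l : List (Fin (d + 1)) | l.length = n + 1}.Finite :=
    List.finite_length_eq _ _
  refine (finite_words.image (List.map Fin.val)).subset ?_
  rintro _ ⟨⟨t, ht⟩, rfl⟩
  refine ⟨t.ld.map fun a => ⟨min a d, by omega⟩, by simp [length_ld, ht], ?_⟩
  simp [cappedLd, Function.comp_def]

theorem cappedLdSet_succ_succ (d n : ℕ) :
    cappedLdSet (d + 1) (n + 1) = (fun q : List ℕ × List ℕ => q.1.map (· + 1) ++ q.2) ''
      ⋃ p ∈ antidiagonal n, cappedLdSet d p.1 ×ˢ cappedLdSet (d + 1) p.2 := by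
  ext L
  simp only [Set.mem_image, Set.mem_iUnion₂, Prod.exists]
  constructor
  · rintro ⟨⟨_ | ⟨l, r⟩, ht⟩, rfl⟩
    · simp [numLeaves] at ht
    · have hl := l.numLeaves_pos
      have hr := r.numLeaves_pos
      rw [numLeaves] at ht
      refine ⟨l.cappedLd d, r.cappedLd (d + 1), ⟨l.numLeaves - 1, r.numLeaves - 1,
        mem_antidiagonal.2 (by omega), cappedLd_mem_cappedLdSet (by omega),
        cappedLd_mem_cappedLdSet (by omega)⟩, (cappedLd_succ_node d l r).symm⟩
  · rintro ⟨_, _, ⟨i, j, hij, ⟨⟨l, hl⟩, rfl⟩, ⟨⟨r, hr⟩, rfl⟩⟩, rfl⟩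
    rw [mem_antidiagonal] at hij
    exact ⟨⟨node l r, by rw [numLeaves]; omega⟩, cappedLd_succ_node d l r⟩

theorem append_cons_inj_of_notMem_left {α : Type*} {a : α} {x x' y y' : List α}
    (hx : a ∉ x) (hx' : a ∉ x') : x ++ a :: y = x' ++ a :: y' ↔ x = x' ∧ y = y' := by
  classical
  refine ⟨fun h => ?_, by rintro ⟨rfl, rfl⟩; rfl⟩
  have length_eq : x.length = x'.length := by
    simpa [List.idxOf_append, hx, hx'] using congrArg (List.idxOf a) h
  obtain ⟨rfl, h_cons⟩ := List.append_inj h length_eq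
  exact ⟨rfl, List.tail_eq_of_cons_eq h_cons⟩

theorem injOn_map_succ_append (d : ℕ) :
    Set.InjOn (fun q : List ℕ × List ℕ => q.1.map (· + 1) ++ q.2)
      (Set.range (cappedLd (d + 1)) ×ˢ Set.univ) := by
  rintro ⟨_, y⟩ ⟨⟨t, rfl⟩, -⟩ ⟨_, y'⟩ ⟨⟨t', rfl⟩, -⟩ h
  obtain ⟨L, hL, h0⟩ := t.exists_cappedLd_succ_eq_append_zero d
  obtain ⟨L', hL', h0'⟩ := t'.exists_cappedLd_succ_eq_append_zero d
  have split : L.map (· + 1) ++ 1 :: y = L'.map (· + 1) ++ 1 :: y' := by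
    simpa [hL, hL'] using h
  obtain ⟨map_eq, rfl⟩ :=
    (append_cons_inj_of_notMem_left (by simpa using h0) (by simpa using h0')).1 split
  rw [hL, hL', List.map_injective_iff.2 (add_left_injective 1) map_eq]

theorem pairwiseDisjoint_cappedLdSet_prod (d e n : ℕ) :
    (antidiagonal n : Set (ℕ × ℕ)).PairwiseDisjoint
      fun p => cappedLdSet d p.1 ×ˢ cappedLdSet e p.2 := by
  refine fun p _ p' _ hne => Set.disjoint_left.2 fun q hq hq' => hne ?_
  have hfst := (length_of_mem_cappedLdSet hq.1).symm.trans (length_of_mem_cappedLdSet hq'.1)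
  have hsnd := (length_of_mem_cappedLdSet hq.2).symm.trans (length_of_mem_cappedLdSet hq'.2)
  exact Prod.ext (Nat.succ_injective hfst) (Nat.succ_injective hsnd)

theorem Cde_add_two_one_succ (d n : ℕ) :
    Cde (d + 2) 1 (n + 1) = ∑ p ∈ antidiagonal n, Cde (d + 1) 1 p.1 * Cde (d + 2) 1 p.2 := by
  have injOn : Set.InjOn (fun q : List ℕ × List ℕ => q.1.map (· + 1) ++ q.2)
      (⋃ p ∈ antidiagonal n, cappedLdSet (d + 1) p.1 ×ˢ cappedLdSet (d + 2) p.2) := by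
    refine (injOn_map_succ_append d).mono (Set.iUnion₂_subset fun p _ => ?_)
    exact Set.prod_mono (Set.range_subset_iff.2 fun t => ⟨t.1, rfl⟩) (Set.subset_univ _)
  simp only [Cde_one_right_eq_ncard, ← Set.ncard_prod]
  rw [cappedLdSet_succ_succ, injOn.ncard_image, ← finsum_mem_coe_finset]
  exact (antidiagonal n).finite_toSet.ncard_biUnion
    (fun p _ => (finite_cappedLdSet _ _).prod (finite_cappedLdSet _ _))
    (pairwiseDisjoint_cappedLdSet_prod _ _ n)

/-- The signed Fibonacci polynomial `F_m = ∑ⱼ (-1)ʲ binom(m-j, j) Xʲ`, as a power series. Truncated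
subtraction is harmless here, since `binom(0, j) = 0` for `j > m`. -/
def fibSeries (m : ℕ) : ℤ⟦X⟧ := mk fun j => (-1) ^ j * ((m - j).choose j : ℤ)

theorem fibSeries_zero : fibSeries 0 = 1 := by
  ext j
  cases j <;> simp [fibSeries, coeff_one]

theorem fibSeries_one : fibSeries 1 = 1 := by
  ext j
  cases j <;> simp [fibSeries, coeff_one]

theorem fibSeries_add_two (m : ℕ) : fibSeries (m + 2) = fibSeries (m + 1) - X * fibSeries m := by
  ext j
  cases j with
  | zero => simp [fibSeries]
  | succ j =>
    have pascal : (m + 1 - j).choose (j + 1) = (m - j).choose (j + 1) + (m - j).choose j := by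
      rcases le_or_gt j m with hj | hj
      · rw [Nat.sub_add_comm hj, Nat.choose_succ_succ', add_comm]
      · rw [Nat.choose_eq_zero_of_lt (by omega), Nat.choose_eq_zero_of_lt (by omega),
          Nat.choose_eq_zero_of_lt (by omega)]
    simp only [fibSeries, map_sub, coeff_mk, coeff_succ_X_mul, Nat.reduceSubDiff, pascal]
    push_cast
    ring

/-- The generating function `∑ₙ C^{d,1}_n Xⁿ`. -/
noncomputable def classSeries (d : ℕ) : ℤ⟦X⟧ := mk fun n => (Cde d 1 n : ℤ)

theorem classSeries_one_mul_one_sub_X : classSeries 1 * (1 - X) = 1 := by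
  have h : classSeries 1 = mk 1 := by
    ext n
    simp [classSeries, Cde_one_one]
  rw [h, PowerSeries.mk_one_mul_one_sub_eq_one]

theorem classSeries_add_two (d : ℕ) :
    classSeries (d + 2) = 1 + X * (classSeries (d + 1) * classSeries (d + 2)) := by
  ext n
  cases n with
  | zero => simp [classSeries, Cde_one_right_zero]
  | succ n =>
    rw [map_add, coeff_succ_X_mul, coeff_mul]
    simp [classSeries, Cde_add_two_one_succ, coeff_one]

theorem classSeries_mul_fibSeries (d : ℕ) :
    classSeries (d + 1) * fibSeries (d + 2) = fibSeries (d + 1) := by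
  induction d with
  | zero => rw [fibSeries_add_two, fibSeries_one, fibSeries_zero, mul_one,
      classSeries_one_mul_one_sub_X]
  | succ d ih =>
    rw [fibSeries_add_two]
    linear_combination fibSeries (d + 2) * classSeries_add_two d + X * classSeries (d + 2) * ih

/-- The composition of `n + 1` obtained from a composition of `j` by prepending the part `i + 1`,
where `i + j = n`. -/
def consComposition {i j n : ℕ} (h : i + j = n) (c : Composition j) : Composition (n + 1) where
  blocks := (i + 1) :: c.blocks
  blocks_pos := by
    rintro a (_ | ⟨_, ha⟩)
    exacts [i.succ_pos, c.blocks_pos ha]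
  blocks_sum := by
    rw [List.sum_cons, c.blocks_sum]
    omega

theorem bijective_consComposition (n : ℕ) :
    Function.Bijective fun x : Σ p : antidiagonal n, Composition p.1.2 =>
      consComposition (mem_antidiagonal.1 x.1.2) x.2 := by
  constructor
  · rintro ⟨⟨⟨i, j⟩, hij⟩, c⟩ ⟨⟨⟨i', j'⟩, hij'⟩, c'⟩ h
    obtain ⟨hi, hc⟩ : i + 1 = i' + 1 ∧ c.blocks = c'.blocks :=
      List.cons_eq_cons.1 (congrArg Composition.blocks h)
    obtain rfl : i = i' := Nat.succ_injective hi
    obtain rfl : j = j' :=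
      Nat.add_left_cancel ((mem_antidiagonal.1 hij).trans (mem_antidiagonal.1 hij').symm)
    rw [Composition.ext hc]
  · rintro ⟨_ | ⟨a, L⟩, blocks_pos, blocks_sum⟩
    · simp at blocks_sum
    · have ha : 0 < a := blocks_pos List.mem_cons_self
      rw [List.sum_cons] at blocks_sum
      refine ⟨⟨⟨(a - 1, L.sum), mem_antidiagonal.2 (by omega)⟩,
        ⟨L, fun hb => blocks_pos (List.mem_cons_of_mem _ hb), rfl⟩⟩, Composition.ext ?_⟩
      simp only [consComposition, Nat.sub_add_cancel ha]

theorem sum_composition_succ {M : Type*} [AddCommMonoid M] (f : List ℕ → M) (n : ℕ) :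
    ∑ c : Composition (n + 1), f c.blocks =
      ∑ p ∈ antidiagonal n, ∑ c : Composition p.2, f ((p.1 + 1) :: c.blocks) := by
  rw [← (bijective_consComposition n).sum_comp, Fintype.sum_sigma]
  exact Finset.sum_coe_sort (antidiagonal n)
    fun p => ∑ c : Composition p.2, f ((p.1 + 1) :: c.blocks)

section compositionSeries

variable {R : Type*}

/-- The generating function of compositions in which a part `a` has weight `w a`. -/
def compositionSeries [Semiring R] (w : ℕ → R) : R⟦X⟧ :=
  mk fun n => ∑ c : Composition n, (c.blocks.map w).prod

theorem sum_composition_head_mul_prod_tail [Semiring R] (u w : ℕ → R) (n : ℕ) :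
    ∑ c : Composition (n + 1), u c.blocks.headI * (c.blocks.tail.map w).prod =
      coeff n (mk (fun i => u (i + 1)) * compositionSeries w) := by
  rw [sum_composition_succ fun L => u L.headI * (L.tail.map w).prod]
  simp [coeff_mul, compositionSeries, Finset.mul_sum]

theorem compositionSeries_eq_one_add [Semiring R] (w : ℕ → R) :
    compositionSeries w = 1 + X * (mk (fun i => w (i + 1)) * compositionSeries w) := by
  ext n
  cases n with
  | zero => simp [compositionSeries, (Composition.blocks_eq_nil _).2 rfl, composition_card]
  | succ n =>
    rw [map_add, coeff_succ_X_mul, ← sum_composition_head_mul_prod_tail, compositionSeries,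
      coeff_mk, sum_composition_succ fun L => (L.map w).prod,
      sum_composition_succ fun L => w L.headI * (L.tail.map w).prod]
    simp [coeff_one]

theorem one_sub_mul_compositionSeries [Ring R] (w : ℕ → R) :
    (1 - X * mk fun i => w (i + 1)) * compositionSeries w = 1 := by
  rw [sub_mul, one_mul, mul_assoc, sub_eq_iff_eq_add]
  exact compositionSeries_eq_one_add w

end compositionSeries

/-- The signed weight `(-1)^(a-1) binom(d-a, a-1)` of the first part `a` of a composition. -/
def headWeight (d a : ℕ) : ℤ := (-1) ^ (a - 1) * ((d - a).choose (a - 1) : ℤ)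

/-- The signed weight `(-1)^(a-1) binom(d+1-a, a)` of a later part `a` of a composition. -/
def tailWeight (d a : ℕ) : ℤ := (-1) ^ (a - 1) * ((d + 1 - a).choose a : ℤ)

theorem two_mul_le_of_headWeight_ne_zero {d a : ℕ} (hd : 1 ≤ d) (h : headWeight d a ≠ 0) :
    2 * a ≤ d + 1 := by
  contrapose! h
  rw [headWeight, Nat.choose_eq_zero_of_lt (by omega), Nat.cast_zero, mul_zero]

theorem two_mul_le_of_tailWeight_ne_zero {d a : ℕ} (h : tailWeight d a ≠ 0) : 2 * a ≤ d + 1 := by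
  contrapose! h
  rw [tailWeight, Nat.choose_eq_zero_of_lt (by omega), Nat.cast_zero, mul_zero]

theorem two_mul_le_of_weight_ne_zero {d : ℕ} (hd : 1 ≤ d) {L : List ℕ}
    (h : headWeight d L.headI * (L.tail.map (tailWeight d)).prod ≠ 0) :
    ∀ a ∈ L, 2 * a ≤ d + 1 := by
  obtain ⟨head_ne_zero, tail_ne_zero⟩ := mul_ne_zero_iff.1 h
  intro a ha
  cases ha with
  | head => exact two_mul_le_of_headWeight_ne_zero hd head_ne_zero
  | tail _ ha =>
    refine two_mul_le_of_tailWeight_ne_zero fun h_zero => tail_ne_zero ?_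
    exact List.prod_eq_zero (List.mem_map.2 ⟨a, ha, h_zero⟩)

theorem prod_map_pow_pred {M : Type*} [Monoid M] (x : M) {L : List ℕ} (hL : ∀ a ∈ L, 1 ≤ a) :
    (L.map fun a => x ^ (a - 1)).prod = x ^ (L.sum - L.length) := by
  induction L with
  | nil => simp
  | cons a L ih =>
    obtain ⟨ha, hL⟩ := List.forall_mem_cons.1 hL
    have : L.length ≤ L.sum := List.length_le_sum_of_one_le L hL
    rw [List.map_cons, List.prod_cons, ih hL, ← pow_add, List.sum_cons, List.length_cons]
    congr 1
    omega

theorem signed_choose_prod_eq_weight_prod (d : ℕ) {n : ℕ} (c : Composition n) :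
    (-1 : ℤ) ^ (n - c.length) * ((d - c.blocks.headI).choose (c.blocks.headI - 1) : ℤ) *
        (c.blocks.tail.map fun a => (((d + 1 - a).choose a : ℕ) : ℤ)).prod =
      headWeight d c.blocks.headI * (c.blocks.tail.map (tailWeight d)).prod := by
  have sign_eq : (-1 : ℤ) ^ (n - c.length) = (c.blocks.map fun a => (-1) ^ (a - 1)).prod := by
    rw [prod_map_pow_pred _ fun a ha => c.one_le_blocks ha, c.blocks_sum, Composition.length]
  rw [sign_eq]
  unfold headWeight tailWeight
  rw [List.prod_map_mul]
  cases c.blocks with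
  | nil => simp
  | cons a L =>
    simp only [List.headI_cons, List.tail_cons, List.map_cons, List.prod_cons]
    ring

theorem fibSeries_eq_mk_headWeight (d : ℕ) :
    fibSeries d = mk fun i => headWeight (d + 1) (i + 1) := by
  simp [fibSeries, headWeight]

theorem fibSeries_succ_eq_one_sub (d : ℕ) :
    fibSeries (d + 1) = 1 - X * mk fun i => tailWeight d (i + 1) := by
  ext j
  cases j <;> simp [fibSeries, tailWeight, coeff_one, coeff_succ_X_mul, pow_succ]

theorem classSeries_succ_eq_one_add (d : ℕ) :
    classSeries (d + 1) = 1 + X * (fibSeries d * compositionSeries (tailWeight (d + 1))) := by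
  have inverse : fibSeries (d + 2) * compositionSeries (tailWeight (d + 1)) = 1 := by
    rw [fibSeries_succ_eq_one_sub, one_sub_mul_compositionSeries]
  calc classSeries (d + 1)
      = fibSeries (d + 1) * compositionSeries (tailWeight (d + 1)) := by
        rw [← classSeries_mul_fibSeries, mul_assoc, inverse, mul_one]
    _ = (fibSeries (d + 2) + X * fibSeries d) * compositionSeries (tailWeight (d + 1)) := by
        rw [fibSeries_add_two, sub_add_cancel]
    _ = 1 + X * (fibSeries d * compositionSeries (tailWeight (d + 1))) := by
        rw [add_mul, inverse, mul_assoc]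

/-- for `n,d ≥ 1`,
`C^d_n = Σ_α (-1)^{n-ℓ(α)} binom(d-α₁, α₁-1) Π_{i=2}^{ℓ(α)} binom(d+1-α_i, α_i)`,
the sum being over all compositions `α` of `n` with `max(α) ≤ (d+1)/2`
(equivalently `2·α_i ≤ d+1` for every part `α_i`).  Here `C^d_n := C^{d,1}_n`. -/
theorem stmt5 (n d : ℕ) (hn : 1 ≤ n) (hd : 1 ≤ d) :
    (Cde d 1 n : ℤ) =
      ∑ α ∈ Finset.univ.filter (fun α : Composition n => ∀ a ∈ α.blocks, 2 * a ≤ d + 1),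
        (-1 : ℤ) ^ (n - α.length) * ((d - α.blocks.headI).choose (α.blocks.headI - 1) : ℤ) *
          ((α.blocks.tail).map fun a => (((d + 1 - a).choose a : ℕ) : ℤ)).prod := by
  obtain ⟨d, rfl⟩ := Nat.exists_eq_add_of_le' hd
  obtain ⟨n, rfl⟩ := Nat.exists_eq_add_of_le' hn
  simp only [signed_choose_prod_eq_weight_prod]
  rw [Finset.sum_filter_of_ne fun α _ h => two_mul_le_of_weight_ne_zero hd h]
  calc (Cde (d + 1) 1 (n + 1) : ℤ)
      = coeff (n + 1) (classSeries (d + 1)) := by rw [classSeries, coeff_mk]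
    _ = coeff n (fibSeries d * compositionSeries (tailWeight (d + 1))) := by
        rw [classSeries_succ_eq_one_add, map_add, coeff_succ_X_mul, coeff_one,
          if_neg n.succ_ne_zero, zero_add]
    _ = ∑ α : Composition (n + 1),
          headWeight (d + 1) α.blocks.headI * (α.blocks.tail.map (tailWeight (d + 1))).prod := by
        rw [fibSeries_eq_mk_headWeight, sum_composition_head_mul_prod_tail]
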